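/- Equip C(𝒫;ℝ) with the sup norm ‖u‖∞ and C(𝒫;ℝ)⁴ with the norm ‖N‖ = max_{1≤i≤4} ‖N_i‖∞. Then the operator 𝒯 : C(𝒫;ℝ)⁴ → C(𝒫;ℝ)⁴ is continuous. -/

import Mathlib

open Set MeasureTheory

noncomputable section

/-- The Broadwell collision term `Q(N) = 2cS (N₂N₃ - N₁N₄)` (indexing `N₁ = M 0`, …). -/
def QQ (c S : ℝ) (M : Fin 4 → ℝ → ℝ → ℝ → ℝ) (t x y : ℝ) : ℝ :=
  2 * c * S * (M 1 t x y * M 2 t x y - M 0 t x y * M 3 t x y)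

/-- Signs of `Q` in the four Broadwell equations. -/
def sgn4 : Fin 4 → ℝ := ![1, -1, -1, 1]

/-- `x`-components of the four velocities. -/
def spX (c : ℝ) : Fin 4 → ℝ := ![c, 0, 0, -c]

/-- `y`-components of the four velocities. -/
def spY (c : ℝ) : Fin 4 → ℝ := ![0, c, -c, 0]

/-- Partial derivative in `t`. -/
def pdtF (f : ℝ → ℝ → ℝ → ℝ) (t x y : ℝ) : ℝ := deriv (fun s => f s x y) t

/-- Partial derivative in `x`. -/
def pdxF (f : ℝ → ℝ → ℝ → ℝ) (t x y : ℝ) : ℝ := deriv (fun s => f t s y) x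

/-- Partial derivative in `y`. -/
def pdyF (f : ℝ → ℝ → ℝ → ℝ) (t x y : ℝ) : ℝ := deriv (fun s => f t x s) y

/-- `f` possesses all three first-order partial derivatives at `p`. -/
def HasPartials (f : ℝ → ℝ → ℝ → ℝ) (p : ℝ × ℝ × ℝ) : Prop :=
  DifferentiableAt ℝ (fun s => f s p.2.1 p.2.2) p.1 ∧
  DifferentiableAt ℝ (fun s => f p.1 s p.2.2) p.2.1 ∧
  DifferentiableAt ℝ (fun s => f p.1 p.2.1 s) p.2.2

/-- Continuity of a curried function of three real variables on a set. -/
def Cont3 (f : ℝ → ℝ → ℝ → ℝ) (D : Set (ℝ × ℝ × ℝ)) : Prop :=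
  ContinuousOn (fun p : ℝ × ℝ × ℝ => f p.1 p.2.1 p.2.2) D

/-- Sup norm over `D` of a function of three variables. -/
def supNorm3 (D : Set (ℝ × ℝ × ℝ)) (f : ℝ → ℝ → ℝ → ℝ) : ℝ :=
  sSup ((fun p : ℝ × ℝ × ℝ => |f p.1 p.2.1 p.2.2|) '' D)

/-- `‖N‖ = max_i ‖N_i‖_∞` over `D`. -/
def norm4 (D : Set (ℝ × ℝ × ℝ)) (M : Fin 4 → ℝ → ℝ → ℝ → ℝ) : ℝ :=
  max (max (supNorm3 D (M 0)) (supNorm3 D (M 1))) (max (supNorm3 D (M 2)) (supNorm3 D (M 3)))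

/-- Sup norm over `D` of a function of two variables. -/
def supNorm2 (D : Set (ℝ × ℝ)) (f : ℝ → ℝ → ℝ) : ℝ :=
  sSup ((fun p : ℝ × ℝ => |f p.1 p.2|) '' D)

/-- `‖g‖₁` for a function of two variables: max of the sup norms of `g` and its two
first-order partial derivatives over `D`. -/
def norm1Two (D : Set (ℝ × ℝ)) (f : ℝ → ℝ → ℝ) : ℝ :=
  max (supNorm2 D f)
    (max (supNorm2 D (fun a b => deriv (fun u => f u b) a))
      (supNorm2 D (fun a b => deriv (fun v => f a v) b)))

/-- The space-time slab `T × [a₁,b₁] × [a₂,b₂]`. -/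
def PsetT (T : Set ℝ) (a₁ b₁ a₂ b₂ : ℝ) : Set (ℝ × ℝ × ℝ) := T ×ˢ Icc a₁ b₁ ×ˢ Icc a₂ b₂

/-- The spatial rectangle `[a₁,b₁] × [a₂,b₂]`. -/
def Rect2 (a₁ b₁ a₂ b₂ : ℝ) : Set (ℝ × ℝ) := Icc a₁ b₁ ×ˢ Icc a₂ b₂

/-- A function of two variables which is continuous and bounded on `D` with continuous
and bounded first-order partial derivatives on `D`. -/
def Smooth2 (D : Set (ℝ × ℝ)) (f : ℝ → ℝ → ℝ) : Prop :=
  ContinuousOn (fun p : ℝ × ℝ => f p.1 p.2) D ∧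
  (∀ p ∈ D, DifferentiableAt ℝ (fun u => f u p.2) p.1 ∧
    DifferentiableAt ℝ (fun v => f p.1 v) p.2) ∧
  ContinuousOn (fun p : ℝ × ℝ => deriv (fun u => f u p.2) p.1) D ∧
  ContinuousOn (fun p : ℝ × ℝ => deriv (fun v => f p.1 v) p.2) D ∧
  ∃ C, ∀ p ∈ D, |f p.1 p.2| ≤ C ∧
    |deriv (fun u => f u p.2) p.1| ≤ C ∧ |deriv (fun v => f p.1 v) p.2| ≤ C

/-- Nonnegativity of a function of two variables on `D`. -/
def Nonneg2 (D : Set (ℝ × ℝ)) (f : ℝ → ℝ → ℝ) : Prop := ∀ p ∈ D, 0 ≤ f p.1 p.2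

/-- The initial data `N0` and boundary data `B1, B2, B3, B4` are nonnegative, continuous
and bounded with continuous bounded first-order partial derivatives, and satisfy the
compatibility conditions at time `t0`. -/
def NiceData (T : Set ℝ) (t0 a₁ b₁ a₂ b₂ : ℝ) (N0 : Fin 4 → ℝ → ℝ → ℝ)
    (B1 B2 B3 B4 : ℝ → ℝ → ℝ) : Prop :=
  (∀ i, Smooth2 (Rect2 a₁ b₁ a₂ b₂) (N0 i) ∧ Nonneg2 (Rect2 a₁ b₁ a₂ b₂) (N0 i)) ∧
  (Smooth2 (T ×ˢ Icc a₂ b₂) B1 ∧ Nonneg2 (T ×ˢ Icc a₂ b₂) B1) ∧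
  (Smooth2 (T ×ˢ Icc a₁ b₁) B2 ∧ Nonneg2 (T ×ˢ Icc a₁ b₁) B2) ∧
  (Smooth2 (T ×ˢ Icc a₁ b₁) B3 ∧ Nonneg2 (T ×ˢ Icc a₁ b₁) B3) ∧
  (Smooth2 (T ×ˢ Icc a₂ b₂) B4 ∧ Nonneg2 (T ×ˢ Icc a₂ b₂) B4) ∧
  (∀ y ∈ Icc a₂ b₂, N0 0 a₁ y = B1 t0 y) ∧
  (∀ x ∈ Icc a₁ b₁, N0 1 x a₂ = B2 t0 x) ∧
  (∀ x ∈ Icc a₁ b₁, N0 2 x b₂ = B3 t0 x) ∧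
  (∀ y ∈ Icc a₂ b₂, N0 3 b₁ y = B4 t0 y)

/-- `N` is a classical solution of the initial-boundary value problem for the planar
four-velocity Broadwell model on `T × [a₁,b₁] × [a₂,b₂]`, with initial time `t0`,
initial data `N0` and boundary data `B1, B2, B3, B4`. -/
def IsSol (c S : ℝ) (T : Set ℝ) (t0 a₁ b₁ a₂ b₂ : ℝ) (N0 : Fin 4 → ℝ → ℝ → ℝ)
    (B1 B2 B3 B4 : ℝ → ℝ → ℝ) (N : Fin 4 → ℝ → ℝ → ℝ → ℝ) : Prop :=
  (∀ i, Cont3 (N i) (PsetT T a₁ b₁ a₂ b₂)) ∧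
  (∀ i, ∀ p ∈ interior (PsetT T a₁ b₁ a₂ b₂), HasPartials (N i) p) ∧
  (∀ i, ∀ p ∈ interior (PsetT T a₁ b₁ a₂ b₂),
    pdtF (N i) p.1 p.2.1 p.2.2 + spX c i * pdxF (N i) p.1 p.2.1 p.2.2 +
      spY c i * pdyF (N i) p.1 p.2.1 p.2.2 = sgn4 i * QQ c S N p.1 p.2.1 p.2.2) ∧
  (∀ i, ∀ x ∈ Icc a₁ b₁, ∀ y ∈ Icc a₂ b₂, N i t0 x y = N0 i x y) ∧
  (∀ t ∈ T, ∀ y ∈ Icc a₂ b₂, N 0 t a₁ y = B1 t y) ∧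
  (∀ t ∈ T, ∀ x ∈ Icc a₁ b₁, N 1 t x a₂ = B2 t x) ∧
  (∀ t ∈ T, ∀ x ∈ Icc a₁ b₁, N 2 t x b₂ = B3 t x) ∧
  (∀ t ∈ T, ∀ y ∈ Icc a₂ b₂, N 3 t b₁ y = B4 t y)

/-- The operator `𝒯`, defined by integration along the characteristics. -/
def Tcal (c S τ a₁ b₁ a₂ b₂ : ℝ) (N0 : Fin 4 → ℝ → ℝ → ℝ) (B1 B2 B3 B4 : ℝ → ℝ → ℝ)
    (M : Fin 4 → ℝ → ℝ → ℝ → ℝ) : Fin 4 → ℝ → ℝ → ℝ → ℝ :=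
  ![fun t x y =>
      if a₁ ≤ x - c * (t - τ) then
        (∫ s in τ..t, QQ c S M s (x + c * (s - t)) y) + N0 0 (x - c * (t - τ)) y
      else
        (∫ s in (t - (x - a₁) / c)..t, QQ c S M s (x + c * (s - t)) y) +
          B1 (t - (x - a₁) / c) y,
    fun t x y =>
      if a₂ ≤ y - c * (t - τ) then
        (∫ s in τ..t, -QQ c S M s x (y + c * (s - t))) + N0 1 x (y - c * (t - τ))
      else
        (∫ s in (t - (y - a₂) / c)..t, -QQ c S M s x (y + c * (s - t))) +
          B2 (t - (y - a₂) / c) x,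
    fun t x y =>
      if y + c * (t - τ) ≤ b₂ then
        (∫ s in τ..t, -QQ c S M s x (y - c * (s - t))) + N0 2 x (y + c * (t - τ))
      else
        (∫ s in (t - (b₂ - y) / c)..t, -QQ c S M s x (y - c * (s - t))) +
          B3 (t - (b₂ - y) / c) x,
    fun t x y =>
      if x + c * (t - τ) ≤ b₁ then
        (∫ s in τ..t, QQ c S M s (x - c * (s - t)) y) + N0 3 (x + c * (t - τ)) y
      else
        (∫ s in (t - (b₁ - x) / c)..t, QQ c S M s (x - c * (s - t)) y) +
          B4 (t - (b₁ - x) / c) y]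

/-- `ρ(|M|) = |M₁| + |M₂| + |M₃| + |M₄|`. -/
def rhoA (M : Fin 4 → ℝ → ℝ → ℝ → ℝ) (t x y : ℝ) : ℝ :=
  |M 0 t x y| + |M 1 t x y| + |M 2 t x y| + |M 3 t x y|

/-- `Q(|M|)`. -/
def QQa (c S : ℝ) (M : Fin 4 → ℝ → ℝ → ℝ → ℝ) (t x y : ℝ) : ℝ :=
  2 * c * S * (|M 1 t x y| * |M 2 t x y| - |M 0 t x y| * |M 3 t x y|)

/-- `Q_i^σ(|M|) = σ ρ(|M|) |M_i| ± Q(|M|)`. -/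
def Qsig (c S σ : ℝ) (i : Fin 4) (M : Fin 4 → ℝ → ℝ → ℝ → ℝ) (t x y : ℝ) : ℝ :=
  σ * rhoA M t x y * |M i t x y| + sgn4 i * QQa c S M t x y

/-- Duhamel formula with integrating factor along the `i`-th characteristic, starting at
time `t0` with datum `datum`. -/
def duh (c S σ : ℝ) (i : Fin 4) (M : Fin 4 → ℝ → ℝ → ℝ → ℝ) (t0 t x y datum : ℝ) : ℝ :=
  ((∫ s in t0..t,
      Real.exp (σ * ∫ r in t0..s,
        rhoA M r (x + spX c i * (r - t)) (y + spY c i * (r - t))) *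
        Qsig c S σ i M s (x + spX c i * (s - t)) (y + spY c i * (s - t))) + datum) *
    Real.exp (-(σ * ∫ s in t0..t, rhoA M s (x + spX c i * (s - t)) (y + spY c i * (s - t))))

/-- The operator `𝒯^σ`. -/
def Tsig (c S σ τ a₁ b₁ a₂ b₂ : ℝ) (N0 : Fin 4 → ℝ → ℝ → ℝ) (B1 B2 B3 B4 : ℝ → ℝ → ℝ)
    (M : Fin 4 → ℝ → ℝ → ℝ → ℝ) : Fin 4 → ℝ → ℝ → ℝ → ℝ :=
  ![fun t x y =>
      if a₁ ≤ x - c * (t - τ) then duh c S σ 0 M τ t x y (N0 0 (x - c * (t - τ)) y)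
      else duh c S σ 0 M (t - (x - a₁) / c) t x y (B1 (t - (x - a₁) / c) y),
    fun t x y =>
      if a₂ ≤ y - c * (t - τ) then duh c S σ 1 M τ t x y (N0 1 x (y - c * (t - τ)))
      else duh c S σ 1 M (t - (y - a₂) / c) t x y (B2 (t - (y - a₂) / c) x),
    fun t x y =>
      if y + c * (t - τ) ≤ b₂ then duh c S σ 2 M τ t x y (N0 2 x (y + c * (t - τ)))
      else duh c S σ 2 M (t - (b₂ - y) / c) t x y (B3 (t - (b₂ - y) / c) x),
    fun t x y =>
      if x + c * (t - τ) ≤ b₁ then duh c S σ 3 M τ t x y (N0 3 (x + c * (t - τ)) y)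
      else duh c S σ 3 M (t - (b₁ - x) / c) t x y (B4 (t - (b₁ - x) / c) y)]

/-- Complement of the four exceptional planes. -/
def offPlanes (c τ a₁ b₁ a₂ b₂ : ℝ) : Set (ℝ × ℝ × ℝ) :=
  {p | p.2.1 - c * (p.1 - τ) ≠ a₁ ∧ p.2.2 - c * (p.1 - τ) ≠ a₂ ∧
    p.2.2 + c * (p.1 - τ) ≠ b₂ ∧ p.2.1 + c * (p.1 - τ) ≠ b₁}

/-- The interior of `𝒫` minus the four exceptional planes. -/
def Dset (c τ τ' a₁ b₁ a₂ b₂ : ℝ) : Set (ℝ × ℝ × ℝ) :=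
  (Ioo τ τ' ×ˢ Ioo a₁ b₁ ×ˢ Ioo a₂ b₂) ∩ offPlanes c τ a₁ b₁ a₂ b₂

/-- `u` has first-order partial derivatives on `D`, continuous and bounded there. -/
def DerivReg (D : Set (ℝ × ℝ × ℝ)) (u : ℝ → ℝ → ℝ → ℝ) : Prop :=
  (∀ p ∈ D, HasPartials u p) ∧
  Cont3 (pdtF u) D ∧ Cont3 (pdxF u) D ∧ Cont3 (pdyF u) D ∧
  ∃ C, ∀ p ∈ D, |pdtF u p.1 p.2.1 p.2.2| ≤ C ∧
    |pdxF u p.1 p.2.1 p.2.2| ≤ C ∧ |pdyF u p.1 p.2.1 p.2.2| ≤ C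

/-- Membership in the space `E`: continuity on `𝒫` plus regularity of the first-order
partial derivatives off the four exceptional planes. -/
def memE (c τ τ' a₁ b₁ a₂ b₂ : ℝ) (u : ℝ → ℝ → ℝ → ℝ) : Prop :=
  Cont3 u (PsetT (Icc τ τ') a₁ b₁ a₂ b₂) ∧ DerivReg (Dset c τ τ' a₁ b₁ a₂ b₂) u

/-- `‖u‖₁`: the max of the sup norm of `u` over `P` and of the sup norms of its
first-order partial derivatives over `D`. -/
def norm1E (P D : Set (ℝ × ℝ × ℝ)) (u : ℝ → ℝ → ℝ → ℝ) : ℝ :=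
  max (supNorm3 P u)
    (max (supNorm3 D (pdtF u)) (max (supNorm3 D (pdxF u)) (supNorm3 D (pdyF u))))

/-- `𝒩(N) = max_i ‖N_i‖₁`. -/
def NN4 (P D : Set (ℝ × ℝ × ℝ)) (N : Fin 4 → ℝ → ℝ → ℝ → ℝ) : ℝ :=
  max (max (norm1E P D (N 0)) (norm1E P D (N 1)))
    (max (norm1E P D (N 2)) (norm1E P D (N 3)))

/-- The convex set `𝓜_R = {N ∈ E⁴ : 𝒩(N) ≤ R}`. -/
def MR (c τ τ' a₁ b₁ a₂ b₂ R : ℝ) : Set (Fin 4 → ℝ → ℝ → ℝ → ℝ) :=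
  {N | (∀ i, memE c τ τ' a₁ b₁ a₂ b₂ (N i)) ∧
    NN4 (PsetT (Icc τ τ') a₁ b₁ a₂ b₂) (Dset c τ τ' a₁ b₁ a₂ b₂) N ≤ R}

/-- The transported initial datum `N̄_i^τ`. -/
def barN0 (c τ : ℝ) (N0 : Fin 4 → ℝ → ℝ → ℝ) (i : Fin 4) : ℝ → ℝ → ℝ → ℝ :=
  fun t x y => N0 i (x - spX c i * (t - τ)) (y - spY c i * (t - τ))

/-- The transported boundary data `N̄₁⁻, N̄₂⁻, N̄₃⁺, N̄₄⁺`. -/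
def barB (c a₁ b₁ a₂ b₂ : ℝ) (B1 B2 B3 B4 : ℝ → ℝ → ℝ) : Fin 4 → ℝ → ℝ → ℝ → ℝ :=
  ![fun t x y => B1 (t - (x - a₁) / c) y,
    fun t x y => B2 (t - (y - a₂) / c) x,
    fun t x y => B3 (t - (b₂ - y) / c) x,
    fun t x y => B4 (t - (b₁ - x) / c) y]

/-- Domain of definition of the transported initial datum `N̄_i^τ` inside `𝒫`. -/
def domBar0 (c τ a₁ b₁ a₂ b₂ : ℝ) (T : Set ℝ) (i : Fin 4) : Set (ℝ × ℝ × ℝ) :=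
  PsetT T a₁ b₁ a₂ b₂ ∩
    {p | (p.2.1 - spX c i * (p.1 - τ), p.2.2 - spY c i * (p.1 - τ)) ∈ Rect2 a₁ b₁ a₂ b₂}

/-- Domains of definition of the transported boundary data inside `𝒫`. -/
def domBarB (c a₁ b₁ a₂ b₂ : ℝ) (T : Set ℝ) : Fin 4 → Set (ℝ × ℝ × ℝ) :=
  ![PsetT T a₁ b₁ a₂ b₂ ∩ {p | p.1 - (p.2.1 - a₁) / c ∈ T},
    PsetT T a₁ b₁ a₂ b₂ ∩ {p | p.1 - (p.2.2 - a₂) / c ∈ T},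
    PsetT T a₁ b₁ a₂ b₂ ∩ {p | p.1 - (b₂ - p.2.2) / c ∈ T},
    PsetT T a₁ b₁ a₂ b₂ ∩ {p | p.1 - (b₁ - p.2.1) / c ∈ T}]

/-- `‖N̄_i^τ‖₁`. -/
def nb0 (c τ a₁ b₁ a₂ b₂ : ℝ) (T : Set ℝ) (N0 : Fin 4 → ℝ → ℝ → ℝ) (i : Fin 4) : ℝ :=
  norm1E (domBar0 c τ a₁ b₁ a₂ b₂ T i) (domBar0 c τ a₁ b₁ a₂ b₂ T i) (barN0 c τ N0 i)

/-- `‖N̄₁⁻‖₁`, `‖N̄₂⁻‖₁`, `‖N̄₃⁺‖₁`, `‖N̄₄⁺‖₁`. -/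
def nbB (c a₁ b₁ a₂ b₂ : ℝ) (T : Set ℝ) (B1 B2 B3 B4 : ℝ → ℝ → ℝ) (i : Fin 4) : ℝ :=
  norm1E (domBarB c a₁ b₁ a₂ b₂ T i) (domBarB c a₁ b₁ a₂ b₂ T i)
    (barB c a₁ b₁ a₂ b₂ B1 B2 B3 B4 i)

/-- `q`: the max of the `‖·‖₁` norms of the eight transported data functions. -/
def qval (c τ a₁ b₁ a₂ b₂ : ℝ) (T : Set ℝ) (N0 : Fin 4 → ℝ → ℝ → ℝ)
    (B1 B2 B3 B4 : ℝ → ℝ → ℝ) : ℝ :=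
  max
    (max (max (nb0 c τ a₁ b₁ a₂ b₂ T N0 0) (nb0 c τ a₁ b₁ a₂ b₂ T N0 1))
      (max (nb0 c τ a₁ b₁ a₂ b₂ T N0 2) (nb0 c τ a₁ b₁ a₂ b₂ T N0 3)))
    (max (max (nbB c a₁ b₁ a₂ b₂ T B1 B2 B3 B4 0) (nbB c a₁ b₁ a₂ b₂ T B1 B2 B3 B4 1))
      (max (nbB c a₁ b₁ a₂ b₂ T B1 B2 B3 B4 2) (nbB c a₁ b₁ a₂ b₂ T B1 B2 B3 B4 3)))

/-- `μ = 8 + 4/c + 8c`. -/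
def muc (c : ℝ) : ℝ := 8 + 4 / c + 8 * c

/-- `λ = 16 + 16c`. -/
def lamc (c : ℝ) : ℝ := 16 + 16 * c

/-- `δ = 4/c + 8 + 4c`. -/
def delc (c : ℝ) : ℝ := 4 / c + 8 + 4 * c

/-- `γ = 1 + c + 1/c`. -/
def gamc (c : ℝ) : ℝ := 1 + c + 1 / c

/-- `p_σ = (μ + λ σ R₀ (τ'-τ))(σ + cS)`. -/
def psig (c S σ R₀ τ τ' : ℝ) : ℝ := (muc c + lamc c * σ * R₀ * (τ' - τ)) * (σ + c * S)

/-- `q_σ = q (1 + δ σ R₀)`. -/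
def qsig (c σ R₀ q : ℝ) : ℝ := q * (1 + delc c * σ * R₀)

/-- `max_i ‖N_i‖₁` for a solution: sup norms of the `N_i` over `Dom`, and of their
first-order partial derivatives over the interior of `Dom`. -/
def NNSol (Dom : Set (ℝ × ℝ × ℝ)) (N : Fin 4 → ℝ → ℝ → ℝ → ℝ) : ℝ :=
  NN4 Dom (interior Dom) N


/-! Each component `𝒯ᵢ(M)` is, up to sign, the integral of `Q(M)` along the `i`-th characteristic
from the time it enters `𝒫`, plus a datum that does not depend on `M`. Hence the data cancel in
`𝒯(M) - 𝒯(N)`, and since `Q` is quadratic,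
`‖𝒯(M) - 𝒯(N)‖ ≤ 4 |c S| (τ' - τ) (‖M‖ + ‖N‖) ‖M - N‖`. -/

theorem isCompact_PsetT {T : Set ℝ} (hT : IsCompact T) (a₁ b₁ a₂ b₂ : ℝ) :
    IsCompact (PsetT T a₁ b₁ a₂ b₂) :=
  hT.prod (isCompact_Icc.prod isCompact_Icc)

section SupNorm

theorem supNorm3_le_norm4 (D : Set (ℝ × ℝ × ℝ)) (M : Fin 4 → ℝ → ℝ → ℝ → ℝ) (i : Fin 4) :
    supNorm3 D (M i) ≤ norm4 D M := by
  unfold norm4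
  fin_cases i <;> simp

theorem norm4_nonneg (D : Set (ℝ × ℝ × ℝ)) (M : Fin 4 → ℝ → ℝ → ℝ → ℝ) : 0 ≤ norm4 D M := by
  refine le_trans (Real.sSup_nonneg ?_) (supNorm3_le_norm4 D M 0)
  rintro _ ⟨p, -, rfl⟩
  exact abs_nonneg _

variable {D : Set (ℝ × ℝ × ℝ)}

theorem abs_le_supNorm3 (hD : IsCompact D) {f : ℝ → ℝ → ℝ → ℝ} (hf : Cont3 f D) {t x y : ℝ}
    (hp : (t, x, y) ∈ D) : |f t x y| ≤ supNorm3 D f :=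
  le_csSup (hD.image_of_continuousOn (ContinuousOn.abs hf)).bddAbove ⟨(t, x, y), hp, rfl⟩

theorem abs_le_norm4 (hD : IsCompact D) {M : Fin 4 → ℝ → ℝ → ℝ → ℝ} (hM : ∀ i, Cont3 (M i) D)
    (i : Fin 4) {t x y : ℝ} (hp : (t, x, y) ∈ D) : |M i t x y| ≤ norm4 D M :=
  (abs_le_supNorm3 hD (hM i) hp).trans (supNorm3_le_norm4 D M i)

theorem norm4_le {M : Fin 4 → ℝ → ℝ → ℝ → ℝ} {C : ℝ} (hC : 0 ≤ C)
    (h : ∀ i t x y, (t, x, y) ∈ D → |M i t x y| ≤ C) : norm4 D M ≤ C := by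
  have hsup : ∀ i, supNorm3 D (M i) ≤ C := by
    intro i
    refine Real.sSup_le ?_ hC
    rintro _ ⟨⟨t, x, y⟩, hp, rfl⟩
    exact h i t x y hp
  exact max_le (max_le (hsup 0) (hsup 1)) (max_le (hsup 2) (hsup 3))

theorem abs_sub_le_norm4_sub (hD : IsCompact D) {M N : Fin 4 → ℝ → ℝ → ℝ → ℝ}
    (hM : ∀ i, Cont3 (M i) D) (hN : ∀ i, Cont3 (N i) D) (i : Fin 4) {t x y : ℝ}
    (hp : (t, x, y) ∈ D) :
    |M i t x y - N i t x y| ≤ norm4 D (fun i t x y => M i t x y - N i t x y) :=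
  abs_le_norm4 (M := fun i t x y => M i t x y - N i t x y) hD
    (fun j => ContinuousOn.sub (hM j) (hN j)) i hp

theorem norm4_le_norm4_add_norm4_sub (hD : IsCompact D) {M N : Fin 4 → ℝ → ℝ → ℝ → ℝ}
    (hM : ∀ i, Cont3 (M i) D) (hN : ∀ i, Cont3 (N i) D) :
    norm4 D M ≤ norm4 D N + norm4 D (fun i t x y => M i t x y - N i t x y) := by
  refine norm4_le (add_nonneg (norm4_nonneg D _) (norm4_nonneg D _)) fun i t x y hp => ?_
  calc |M i t x y| = |N i t x y + (M i t x y - N i t x y)| := by rw [add_sub_cancel]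
    _ ≤ |N i t x y| + |M i t x y - N i t x y| := abs_add_le _ _
    _ ≤ _ := add_le_add (abs_le_norm4 hD hN i hp) (abs_sub_le_norm4_sub hD hM hN i hp)

end SupNorm

section Collision

theorem norm_mul_sub_mul_le_of_le {R : Type*} [NonUnitalSeminormedRing R] {a b a' b' : R}
    {A B δ δ' : ℝ} (hb : ‖b‖ ≤ A) (ha' : ‖a'‖ ≤ B) (haa' : ‖a - a'‖ ≤ δ) (hbb' : ‖b - b'‖ ≤ δ') :
    ‖a * b - a' * b'‖ ≤ δ * A + B * δ' := by
  have hδ : 0 ≤ δ := (norm_nonneg _).trans haa'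
  have hB : 0 ≤ B := (norm_nonneg _).trans ha'
  calc ‖a * b - a' * b'‖ = ‖(a - a') * b + a' * (b - b')‖ := by
        rw [sub_mul, mul_sub, sub_add_sub_cancel]
    _ ≤ ‖a - a'‖ * ‖b‖ + ‖a'‖ * ‖b - b'‖ :=
        norm_add_le_of_le (norm_mul_le _ _) (norm_mul_le _ _)
    _ ≤ δ * A + B * δ' := by gcongr

theorem abs_QQ_sub_le (c S : ℝ) {M N : Fin 4 → ℝ → ℝ → ℝ → ℝ} {t x y A B δ : ℝ}
    (hM : ∀ i, |M i t x y| ≤ A) (hN : ∀ i, |N i t x y| ≤ B)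
    (hMN : ∀ i, |M i t x y - N i t x y| ≤ δ) :
    |QQ c S M t x y - QQ c S N t x y| ≤ 4 * |c * S| * ((A + B) * δ) := by
  have hprod : ∀ i j, |M i t x y * M j t x y - N i t x y * N j t x y| ≤ (A + B) * δ :=
    fun i j => (norm_mul_sub_mul_le_of_le (R := ℝ) (hM j) (hN i) (hMN i) (hMN j)).trans_eq
      (by ring)
  have hfactor : QQ c S M t x y - QQ c S N t x y =
      2 * (c * S) * ((M 1 t x y * M 2 t x y - N 1 t x y * N 2 t x y) -
        (M 0 t x y * M 3 t x y - N 0 t x y * N 3 t x y)) := by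
    unfold QQ
    ring
  calc |QQ c S M t x y - QQ c S N t x y|
      = 2 * |c * S| * |(M 1 t x y * M 2 t x y - N 1 t x y * N 2 t x y) -
          (M 0 t x y * M 3 t x y - N 0 t x y * N 3 t x y)| := by
        rw [hfactor, abs_mul, abs_mul, abs_two]
    _ ≤ 2 * |c * S| * ((A + B) * δ + (A + B) * δ) := by
        gcongr
        exact (abs_sub _ _).trans (add_le_add (hprod 1 2) (hprod 0 3))
    _ = 4 * |c * S| * ((A + B) * δ) := by ring

theorem abs_QQ_sub_le_norm4 (c S : ℝ) {D : Set (ℝ × ℝ × ℝ)} (hD : IsCompact D)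
    {M N : Fin 4 → ℝ → ℝ → ℝ → ℝ} (hM : ∀ i, Cont3 (M i) D) (hN : ∀ i, Cont3 (N i) D)
    {t x y : ℝ} (hp : (t, x, y) ∈ D) :
    |QQ c S M t x y - QQ c S N t x y| ≤ 4 * |c * S| *
      ((norm4 D M + norm4 D N) * norm4 D (fun i t x y => M i t x y - N i t x y)) :=
  abs_QQ_sub_le c S (fun i => abs_le_norm4 hD hM i hp) (fun i => abs_le_norm4 hD hN i hp)
    (fun i => abs_sub_le_norm4_sub hD hM hN i hp)

theorem continuousOn_QQ_comp (c S : ℝ) {D : Set (ℝ × ℝ × ℝ)} {M : Fin 4 → ℝ → ℝ → ℝ → ℝ}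
    (hM : ∀ i, Cont3 (M i) D) {X Y : ℝ → ℝ} {I : Set ℝ} (hX : ContinuousOn X I)
    (hY : ContinuousOn Y I) (hXY : MapsTo (fun s => (s, X s, Y s)) I D) :
    ContinuousOn (fun s => QQ c S M s (X s) (Y s)) I := by
  have hcomp : ∀ i, ContinuousOn (fun s => M i s (X s) (Y s)) I := fun i =>
    ContinuousOn.comp (hM i) (continuousOn_id.prodMk (hX.prodMk hY)) hXY
  exact continuousOn_const.mul (((hcomp 1).mul (hcomp 2)).sub ((hcomp 0).mul (hcomp 3)))

end Collision

section Characteristics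

theorem sub_div_le_iff {K : Type*} [Field K] [LinearOrder K] [IsStrictOrderedRing K]
    {c d s t : K} (hc : 0 < c) : t - d / c ≤ s ↔ c * (t - s) ≤ d := by
  rw [sub_le_comm, le_div_iff₀' hc]

/-- The time at which the backward `i`-th characteristic through `(t, x, y)` meets the inflow face
of that component: `x = a₁`, `y = a₂`, `y = b₂`, `x = b₁` for `i = 0, 1, 2, 3`. -/
def inflowTime (c a₁ b₁ a₂ b₂ : ℝ) (i : Fin 4) (t x y : ℝ) : ℝ :=
  t - ![x - a₁, y - a₂, b₂ - y, b₁ - x] i / c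

/-- The time at which the `i`-th characteristic through `(t, x, y)` enters the slab `𝒫`, either
through the initial face at time `τ` or through the inflow face. -/
def entryTime (c τ a₁ b₁ a₂ b₂ : ℝ) (i : Fin 4) (t x y : ℝ) : ℝ :=
  max τ (inflowTime c a₁ b₁ a₂ b₂ i t x y)

/-- The value prescribed by the initial or boundary data at the point where the `i`-th
characteristic through `(t, x, y)` enters `𝒫`. -/
def entryDatum (c τ a₁ b₁ a₂ b₂ : ℝ) (N0 : Fin 4 → ℝ → ℝ → ℝ) (B1 B2 B3 B4 : ℝ → ℝ → ℝ)
    (i : Fin 4) (t x y : ℝ) : ℝ :=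
  if inflowTime c a₁ b₁ a₂ b₂ i t x y ≤ τ then barN0 c τ N0 i t x y
  else barB c a₁ b₁ a₂ b₂ B1 B2 B3 B4 i t x y

/-- The integral of the collision term along the `i`-th characteristic through `(t, x, y)`, from
time `t₀` to time `t`. -/
def charIntegral (c S : ℝ) (M : Fin 4 → ℝ → ℝ → ℝ → ℝ) (i : Fin 4) (t₀ t x y : ℝ) : ℝ :=
  ∫ s in t₀..t, QQ c S M s (x + spX c i * (s - t)) (y + spY c i * (s - t))

variable {c τ τ' a₁ b₁ a₂ b₂ t x y : ℝ}

theorem Tcal_eq_ite (hc : 0 < c) (S : ℝ) (N0 : Fin 4 → ℝ → ℝ → ℝ) (B1 B2 B3 B4 : ℝ → ℝ → ℝ)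
    (M : Fin 4 → ℝ → ℝ → ℝ → ℝ) (i : Fin 4) :
    Tcal c S τ a₁ b₁ a₂ b₂ N0 B1 B2 B3 B4 M i t x y =
      if inflowTime c a₁ b₁ a₂ b₂ i t x y ≤ τ then
        sgn4 i * charIntegral c S M i τ t x y + barN0 c τ N0 i t x y
      else
        sgn4 i * charIntegral c S M i (inflowTime c a₁ b₁ a₂ b₂ i t x y) t x y +
          barB c a₁ b₁ a₂ b₂ B1 B2 B3 B4 i t x y := by
  have hlower : ∀ a z : ℝ, a ≤ z - c * (t - τ) ↔ t - (z - a) / c ≤ τ := fun a z => by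
    rw [sub_div_le_iff hc, le_sub_comm]
  have hupper : ∀ b z : ℝ, z + c * (t - τ) ≤ b ↔ t - (b - z) / c ≤ τ := fun b z => by
    rw [sub_div_le_iff hc, le_sub_iff_add_le']
  fin_cases i
  · refine if_congr (hlower a₁ x) ?_ ?_ <;>
      simp [charIntegral, inflowTime, barN0, barB, sgn4, spX, spY]
  · refine if_congr (hlower a₂ y) ?_ ?_ <;>
      simp [charIntegral, inflowTime, barN0, barB, sgn4, spX, spY]
  · refine if_congr (hupper b₂ y) ?_ ?_ <;>
      simp [charIntegral, inflowTime, barN0, barB, sgn4, spX, spY, ← sub_eq_add_neg]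
  · refine if_congr (hupper b₁ x) ?_ ?_ <;>
      simp [charIntegral, inflowTime, barN0, barB, sgn4, spX, spY, ← sub_eq_add_neg]

theorem Tcal_eq_charIntegral_add (hc : 0 < c) (S : ℝ) (N0 : Fin 4 → ℝ → ℝ → ℝ)
    (B1 B2 B3 B4 : ℝ → ℝ → ℝ) (M : Fin 4 → ℝ → ℝ → ℝ → ℝ) (i : Fin 4) :
    Tcal c S τ a₁ b₁ a₂ b₂ N0 B1 B2 B3 B4 M i t x y =
      sgn4 i * charIntegral c S M i (entryTime c τ a₁ b₁ a₂ b₂ i t x y) t x y +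
        entryDatum c τ a₁ b₁ a₂ b₂ N0 B1 B2 B3 B4 i t x y := by
  rw [Tcal_eq_ite hc, entryTime, entryDatum]
  split_ifs with h
  · rw [max_eq_left h]
  · rw [max_eq_right (le_of_not_ge h)]

theorem abs_sgn4 (i : Fin 4) : |sgn4 i| = 1 := by
  fin_cases i <;> simp [sgn4]

theorem entryTime_le (hc : 0 < c) (hp : (t, x, y) ∈ PsetT (Icc τ τ') a₁ b₁ a₂ b₂) (i : Fin 4) :
    entryTime c τ a₁ b₁ a₂ b₂ i t x y ≤ t := by
  obtain ⟨ht, hx, hy⟩ := hp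
  refine max_le ht.1 (sub_le_self _ (div_nonneg ?_ hc.le))
  fin_cases i
  exacts [sub_nonneg.2 hx.1, sub_nonneg.2 hy.1, sub_nonneg.2 hy.2, sub_nonneg.2 hx.2]

theorem characteristic_mapsTo_PsetT (hc : 0 < c)
    (hp : (t, x, y) ∈ PsetT (Icc τ τ') a₁ b₁ a₂ b₂) (i : Fin 4) :
    MapsTo (fun s => (s, x + spX c i * (s - t), y + spY c i * (s - t)))
      (Icc (entryTime c τ a₁ b₁ a₂ b₂ i t x y) t) (PsetT (Icc τ τ') a₁ b₁ a₂ b₂) := by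
  obtain ⟨⟨-, ht⟩, ⟨hx₁, hx₂⟩, hy₁, hy₂⟩ := hp
  rintro s ⟨hentry, hst⟩
  obtain ⟨hτs, hinflow⟩ := max_le_iff.1 hentry
  have hdist := (sub_div_le_iff hc).1 hinflow
  have hback : 0 ≤ c * (t - s) := mul_nonneg hc.le (sub_nonneg.2 hst)
  refine ⟨⟨hτs, hst.trans ht⟩, ?_⟩
  fin_cases i <;> refine ⟨⟨?_, ?_⟩, ?_, ?_⟩ <;>
    simp only [Fin.zero_eta, Fin.mk_one, Fin.reduceFinMk, Matrix.cons_val, spX, spY]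
      at hdist ⊢ <;>
    linarith

end Characteristics

section Lipschitz

variable {c τ τ' a₁ b₁ a₂ b₂ : ℝ}

theorem abs_charIntegral_sub_le (hc : 0 < c) (S : ℝ) {M N : Fin 4 → ℝ → ℝ → ℝ → ℝ} {L t x y : ℝ}
    (hM : ∀ i, Cont3 (M i) (PsetT (Icc τ τ') a₁ b₁ a₂ b₂))
    (hN : ∀ i, Cont3 (N i) (PsetT (Icc τ τ') a₁ b₁ a₂ b₂))
    (hL : ∀ s x y, (s, x, y) ∈ PsetT (Icc τ τ') a₁ b₁ a₂ b₂ →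
      |QQ c S M s x y - QQ c S N s x y| ≤ L)
    (hp : (t, x, y) ∈ PsetT (Icc τ τ') a₁ b₁ a₂ b₂) (i : Fin 4) :
    |charIntegral c S M i (entryTime c τ a₁ b₁ a₂ b₂ i t x y) t x y -
      charIntegral c S N i (entryTime c τ a₁ b₁ a₂ b₂ i t x y) t x y| ≤ L * (τ' - τ) := by
  set t₀ := entryTime c τ a₁ b₁ a₂ b₂ i t x y
  have hle : t₀ ≤ t := entryTime_le hc hp i
  have hchar := characteristic_mapsTo_PsetT hc hp i
  have hint : ∀ {K : Fin 4 → ℝ → ℝ → ℝ → ℝ},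
      (∀ j, Cont3 (K j) (PsetT (Icc τ τ') a₁ b₁ a₂ b₂)) → IntervalIntegrable
        (fun s => QQ c S K s (x + spX c i * (s - t)) (y + spY c i * (s - t))) volume t₀ t :=
    fun hK => (continuousOn_QQ_comp c S hK (by fun_prop) (by fun_prop)
      hchar).intervalIntegrable_of_Icc hle
  have hL₀ : 0 ≤ L := (abs_nonneg _).trans (hL t x y hp)
  have hlen : |t - t₀| ≤ τ' - τ := by
    rw [abs_of_nonneg (sub_nonneg.2 hle)]
    exact sub_le_sub hp.1.2 (le_max_left _ _)
  unfold charIntegral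
  rw [← intervalIntegral.integral_sub (hint hM) (hint hN)]
  calc _ ≤ L * |t - t₀| :=
        intervalIntegral.norm_integral_le_of_norm_le_const (E := ℝ) fun s hs =>
          hL _ _ _ (hchar (Ioc_subset_Icc_self (uIoc_of_le hle ▸ hs)))
    _ ≤ L * (τ' - τ) := mul_le_mul_of_nonneg_left hlen hL₀

theorem norm4_Tcal_sub_le (hc : 0 < c) (S : ℝ) (hτ : τ ≤ τ') (N0 : Fin 4 → ℝ → ℝ → ℝ)
    (B1 B2 B3 B4 : ℝ → ℝ → ℝ) {M N : Fin 4 → ℝ → ℝ → ℝ → ℝ}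
    (hM : ∀ i, Cont3 (M i) (PsetT (Icc τ τ') a₁ b₁ a₂ b₂))
    (hN : ∀ i, Cont3 (N i) (PsetT (Icc τ τ') a₁ b₁ a₂ b₂)) :
    norm4 (PsetT (Icc τ τ') a₁ b₁ a₂ b₂) (fun i t x y =>
        Tcal c S τ a₁ b₁ a₂ b₂ N0 B1 B2 B3 B4 M i t x y -
          Tcal c S τ a₁ b₁ a₂ b₂ N0 B1 B2 B3 B4 N i t x y) ≤
      4 * |c * S| *
        ((norm4 (PsetT (Icc τ τ') a₁ b₁ a₂ b₂) M + norm4 (PsetT (Icc τ τ') a₁ b₁ a₂ b₂) N) *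
          norm4 (PsetT (Icc τ τ') a₁ b₁ a₂ b₂) (fun i t x y => M i t x y - N i t x y)) *
        (τ' - τ) := by
  have hcompact := isCompact_PsetT (isCompact_Icc : IsCompact (Icc τ τ')) a₁ b₁ a₂ b₂
  refine norm4_le ?_ fun i t x y hp => ?_
  · have hnonneg := norm4_nonneg (PsetT (Icc τ τ') a₁ b₁ a₂ b₂)
    exact mul_nonneg (mul_nonneg (by positivity)
      (mul_nonneg (add_nonneg (hnonneg _) (hnonneg _)) (hnonneg _))) (sub_nonneg.2 hτ)
  · rw [Tcal_eq_charIntegral_add hc, Tcal_eq_charIntegral_add hc, add_sub_add_right_eq_sub,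
      ← mul_sub, abs_mul, abs_sgn4, one_mul]
    exact abs_charIntegral_sub_le hc S hM hN
      (fun _ _ _ hq => abs_QQ_sub_le_norm4 c S hcompact hM hN hq) hp i

end Lipschitz

theorem Tcal_continuous_general {c S τ τ' a₁ b₁ a₂ b₂ : ℝ} (hc : 0 < c) (hτ : τ ≤ τ')
    (N0 : Fin 4 → ℝ → ℝ → ℝ) (B1 B2 B3 B4 : ℝ → ℝ → ℝ)
    (N : Fin 4 → ℝ → ℝ → ℝ → ℝ) (hN : ∀ i, Cont3 (N i) (PsetT (Icc τ τ') a₁ b₁ a₂ b₂))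
    (ε : ℝ) (hε : 0 < ε) :
    ∃ η > 0, ∀ M : Fin 4 → ℝ → ℝ → ℝ → ℝ,
      (∀ i, Cont3 (M i) (PsetT (Icc τ τ') a₁ b₁ a₂ b₂)) →
      norm4 (PsetT (Icc τ τ') a₁ b₁ a₂ b₂) (fun i t x y => M i t x y - N i t x y) ≤ η →
      norm4 (PsetT (Icc τ τ') a₁ b₁ a₂ b₂) (fun i t x y =>
        Tcal c S τ a₁ b₁ a₂ b₂ N0 B1 B2 B3 B4 M i t x y -
          Tcal c S τ a₁ b₁ a₂ b₂ N0 B1 B2 B3 B4 N i t x y) ≤ ε := by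
  set P := PsetT (Icc τ τ') a₁ b₁ a₂ b₂
  have hcompact : IsCompact P := isCompact_PsetT isCompact_Icc a₁ b₁ a₂ b₂
  have hmodulus : ContinuousAt
      (fun η => 4 * |c * S| * ((norm4 P N + η + norm4 P N) * η) * (τ' - τ)) 0 := by fun_prop
  obtain ⟨η, hηε, hη⟩ : ∃ η : ℝ,
      4 * |c * S| * ((norm4 P N + η + norm4 P N) * η) * (τ' - τ) < ε ∧ 0 < η :=
    (((hmodulus.mono_left nhdsWithin_le_nhds).eventually_lt_const (by simpa using hε)).and
      (self_mem_nhdsWithin (s := Ioi (0 : ℝ)))).exists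
  refine ⟨η, hη, fun M hM hMN => (norm4_Tcal_sub_le hc S hτ N0 B1 B2 B3 B4 hM hN).trans
    (le_trans ?_ hηε.le)⟩
  have hMle : norm4 P M ≤ norm4 P N + η :=
    (norm4_le_norm4_add_norm4_sub hcompact hM hN).trans (by gcongr)
  have hNnonneg := norm4_nonneg P N
  gcongr
  exact norm4_nonneg P _

/-- Continuity of the operator `𝒯` on `C(𝒫;ℝ)⁴` for the sup norm. -/
theorem Tcal_continuous
    (c S τ τ' a₁ b₁ a₂ b₂ : ℝ) (hc : 0 < c) (hS : 0 < S)
    (hτ : τ < τ') (ha : a₁ < b₁) (hb : a₂ < b₂)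
    (N0 : Fin 4 → ℝ → ℝ → ℝ) (B1 B2 B3 B4 : ℝ → ℝ → ℝ)
    (hdata : NiceData (Icc τ τ') τ a₁ b₁ a₂ b₂ N0 B1 B2 B3 B4) :
    ∀ N : Fin 4 → ℝ → ℝ → ℝ → ℝ, (∀ i, Cont3 (N i) (PsetT (Icc τ τ') a₁ b₁ a₂ b₂)) →
      ∀ ε > 0, ∃ η > 0, ∀ M : Fin 4 → ℝ → ℝ → ℝ → ℝ,
        (∀ i, Cont3 (M i) (PsetT (Icc τ τ') a₁ b₁ a₂ b₂)) →
        norm4 (PsetT (Icc τ τ') a₁ b₁ a₂ b₂) (fun i t x y => M i t x y - N i t x y) ≤ η →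
        norm4 (PsetT (Icc τ τ') a₁ b₁ a₂ b₂)
          (fun i t x y => Tcal c S τ a₁ b₁ a₂ b₂ N0 B1 B2 B3 B4 M i t x y - Tcal c S τ a₁ b₁ a₂ b₂ N0 B1 B2 B3 B4 N i t x y) ≤ ε :=
  Tcal_continuous_general hc hτ.le N0 B1 B2 B3 B4

end
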